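/- arXiv:1507.05214 — 2 statements merged into one kernel-verified Lean document; each statement's English description precedes it below -/
import Mathlib

section
/- For every probability row vector p ∈ ℝ^N (nonnegative entries summing to 1), the sequence pᵀP^k converges entrywise as k → ∞, and its limit is the unique stationary probability distribution π of P; in particular the limit is independent of the initial vector p. -/
open Matrix

/-- The random-walk transition matrix `H` of a bipartite graph with parts `U`, `V`
and edge relation `E`: `H i j = 1 / dᵢ` if `j` is adjacent to `i`, and `0` otherwise. -/
noncomputable def Hmat {U V : Type*} [Fintype U] [Fintype V]
    (E : U → V → Prop) [∀ u v, Decidable (E u v)] :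
    Matrix (U ⊕ V) (U ⊕ V) ℝ :=
  Matrix.of fun i j =>
    match i, j with
    | Sum.inl u, Sum.inr v =>
        if E u v then 1 / ((Finset.univ.filter fun v' => E u v').card : ℝ) else 0
    | Sum.inr v, Sum.inl u =>
        if E u v then 1 / ((Finset.univ.filter fun u' => E u' v).card : ℝ) else 0
    | _, _ => 0

/-- The block-wise teleportation matrix `M`: `M i j = 1 / xᵢ` if `j` lies in the same
part as `i` (where `xᵢ` is the size of the part containing `i`), and `0` otherwise. -/
noncomputable def Mmat (U V : Type*) [Fintype U] [Fintype V] :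
    Matrix (U ⊕ V) (U ⊕ V) ℝ :=
  Matrix.of fun i j =>
    match i, j with
    | Sum.inl _, Sum.inl _ => 1 / (Fintype.card U : ℝ)
    | Sum.inr _, Sum.inr _ => 1 / (Fintype.card V : ℝ)
    | _, _ => 0

/-- The BipartiteRank transition matrix `P = ε H + (1 - ε) M`. -/
noncomputable def Pmat {U V : Type*} [Fintype U] [Fintype V]
    (E : U → V → Prop) [∀ u v, Decidable (E u v)] (ε : ℝ) :
    Matrix (U ⊕ V) (U ⊕ V) ℝ :=
  ε • Hmat E + (1 - ε) • Mmat U V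

/-!
For a row-stochastic matrix whose rows all dominate a common weight `w`, right multiplication
contracts zero-sum row vectors in the `ℓ¹` norm by the factor `1 - ∑ j, w j`, because `w` can be
subtracted from every row without changing the product. Hence, if some power of a row-stochastic
matrix `P` is positive, that power is a contraction of the probability simplex with the `ℓ¹`
metric, and the Banach fixed point theorem gives existence, uniqueness and convergence at once.

For `P = ε H + (1 - ε) M` the square is already positive: a vertex is joined to every vertex of its
own part by two teleportation steps, and to every vertex of the other part by an edge followed by a
teleportation step.
-/

open Filter Topology

section ContractingIterate

variable {α : Type*} [MetricSpace α] [CompleteSpace α] [Nonempty α] {K : NNReal} {f : α → α}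
  {r : ℕ}

theorem tendsto_iterate_of_contractingWith_iterate (hr : r ≠ 0) (hf : ContractingWith K f^[r])
    (x : α) : Tendsto (fun n => f^[n] x) atTop (𝓝 (hf.fixedPoint f^[r])) := by
  rw [tendsto_def]
  intro s hs
  have residues : ∀ᶠ q in atTop, ∀ m ∈ Finset.range r, (f^[r])^[q] (f^[m] x) ∈ s :=
    (eventually_all_finset _).2 fun m _ => (hf.tendsto_iterate_fixedPoint (f^[m] x)).eventually hs
  filter_upwards [(Nat.tendsto_div_const_atTop hr).eventually residues] with n hn
  have hmem := hn (n % r) (Finset.mem_range.2 (Nat.mod_lt n (Nat.pos_of_ne_zero hr)))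
  rwa [← Function.iterate_mul, ← Function.iterate_add_apply, Nat.div_add_mod] at hmem

end ContractingIterate

section StochasticMatrix

variable {ι κ R : Type*} [Fintype ι]

theorem vecMul_sub_replicateRow_of_sum_eq_zero [Ring R] {x : ι → R} (hx : ∑ i, x i = 0)
    (Q : Matrix ι κ R) (w : κ → R) : x ᵥ* (Q - replicateRow ι w) = x ᵥ* Q := by
  ext j
  simp [vecMul, dotProduct, mul_sub, ← Finset.sum_mul, hx]

theorem sum_abs_vecMul_le_of_sum_eq_zero [CommRing R] [LinearOrder R] [IsOrderedRing R]
    [Fintype κ] {Q : Matrix ι κ R} {w : κ → R} (hw : ∀ i j, w j ≤ Q i j)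
    (hQ : ∀ i, ∑ j, Q i j = 1) {x : ι → R} (hx : ∑ i, x i = 0) :
    ∑ j, |(x ᵥ* Q) j| ≤ (1 - ∑ j, w j) * ∑ i, |x i| :=
  calc ∑ j, |(x ᵥ* Q) j|
      = ∑ j, |∑ i, x i * (Q i j - w j)| := by
        rw [← vecMul_sub_replicateRow_of_sum_eq_zero hx Q w]; rfl
    _ ≤ ∑ j, ∑ i, |x i| * (Q i j - w j) := by
        gcongr with j
        refine (Finset.abs_sum_le_sum_abs _ _).trans_eq (Finset.sum_congr rfl fun i _ => ?_)
        rw [abs_mul, abs_of_nonneg (sub_nonneg.2 (hw i j))]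
    _ = ∑ i, |x i| * (1 - ∑ j, w j) := by
        rw [Finset.sum_comm]
        simp only [← Finset.mul_sum, Finset.sum_sub_distrib, hQ]
    _ = (1 - ∑ j, w j) * ∑ i, |x i| := by rw [← Finset.sum_mul, mul_comm]

theorem mul_apply_pos_of_pos [Semiring R] [PartialOrder R] [IsStrictOrderedRing R] {l : Type*}
    {A : Matrix l ι R} {B : Matrix ι κ R} (hA : ∀ i j, 0 ≤ A i j) (hB : ∀ i j, 0 ≤ B i j)
    {i : l} {k : ι} {j : κ} (hik : 0 < A i k) (hkj : 0 < B k j) : 0 < (A * B) i j :=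
  Finset.sum_pos' (fun k _ => mul_nonneg (hA i k) (hB k j))
    ⟨k, Finset.mem_univ k, mul_pos hik hkj⟩

theorem vecMul_mem_stdSimplex [Semiring R] [PartialOrder R] [IsOrderedRing R] [DecidableEq ι]
    {P : Matrix ι ι R} (hP : P ∈ rowStochastic R ι) {p : ι → R} (hp : p ∈ stdSimplex R ι) :
    p ᵥ* P ∈ stdSimplex R ι := by
  refine ⟨nonneg_vecMul_of_mem_rowStochastic hP hp.1, ?_⟩
  rw [← dotProduct_one]
  exact vecMul_dotProduct_one_eq_one_rowStochastic hP (by rw [dotProduct_one, hp.2])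

/-- The probability simplex as a subspace of `ℓ¹`. It differs from the subtype `stdSimplex ℝ ι`
only in the metric, which there is the supremum metric, for which a positive stochastic matrix need
not act as a contraction. -/
abbrev L1Simplex (ι : Type*) [Fintype ι] : Type _ :=
  {p : PiLp 1 fun _ : ι => ℝ // p.ofLp ∈ stdSimplex ℝ ι}

namespace L1Simplex

instance : CompleteSpace (L1Simplex ι) :=
  ((isClosed_stdSimplex ℝ ι).preimage
    (PiLp.continuous_ofLp 1 fun _ : ι => ℝ)).completeSpace_coe

instance [Nonempty ι] : Nonempty (L1Simplex ι) :=
  let ⟨p, hp⟩ := (inferInstance : Nonempty (stdSimplex ℝ ι))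
  ⟨⟨WithLp.toLp 1 p, hp⟩⟩

theorem dist_eq_sum_abs (p q : L1Simplex ι) :
    dist p q = ∑ i, |(p.1.ofLp - q.1.ofLp) i| := by
  simp [Subtype.dist_eq, PiLp.dist_eq_of_L1, Real.dist_eq]

variable [DecidableEq ι] {P Q : Matrix ι ι ℝ}

/-- The map `p ↦ pᵀ P` of the probability simplex: one step of the Markov chain with transition
matrix `P`. -/
def step (P : Matrix ι ι ℝ) (hP : P ∈ rowStochastic ℝ ι) (p : L1Simplex ι) : L1Simplex ι :=
  ⟨WithLp.toLp 1 (p.1.ofLp ᵥ* P), vecMul_mem_stdSimplex hP p.2⟩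

theorem step_iterate (hP : P ∈ rowStochastic ℝ ι) (k : ℕ) :
    (step P hP)^[k] = step (P ^ k) (pow_mem hP k) := by
  induction k with
  | zero => ext p : 2; simp [step]
  | succ k ih => ext p : 2; simp [Function.iterate_succ_apply', ih, step, pow_succ]

theorem isFixedPt_step_iff {hP : P ∈ rowStochastic ℝ ι} {p : L1Simplex ι} :
    Function.IsFixedPt (step P hP) p ↔ p.1.ofLp ᵥ* P = p.1.ofLp := by
  simp [Function.IsFixedPt, step, Subtype.ext_iff, WithLp.ext_iff]

theorem exists_contractingWith_step [Nonempty ι] (hQ : Q ∈ rowStochastic ℝ ι)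
    (hpos : ∀ i j, 0 < Q i j) : ∃ K, ContractingWith K (step Q hQ) := by
  choose argmin hmin using fun j => Finite.exists_min fun i => Q i j
  set w : ι → ℝ := fun j => Q (argmin j) j
  have hw : 0 < ∑ j, w j := Finset.sum_pos (fun j _ => hpos _ j) Finset.univ_nonempty
  refine ⟨(1 - ∑ j, w j).toNNReal, ?_, LipschitzWith.of_dist_le_mul fun p q => ?_⟩
  · rw [Real.toNNReal_lt_one]
    linarith
  have hsum : ∑ i, (p.1.ofLp - q.1.ofLp) i = 0 := by
    simp [Finset.sum_sub_distrib, p.2.2, q.2.2]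
  calc dist (step Q hQ p) (step Q hQ q)
      = ∑ j, |((p.1.ofLp - q.1.ofLp) ᵥ* Q) j| := by
          rw [dist_eq_sum_abs, sub_vecMul]
          rfl
    _ ≤ (1 - ∑ j, w j) * ∑ i, |(p.1.ofLp - q.1.ofLp) i| :=
        sum_abs_vecMul_le_of_sum_eq_zero (fun i j => hmin j i)
          (sum_row_of_mem_rowStochastic hQ) hsum
    _ ≤ (1 - ∑ j, w j).toNNReal * dist p q := by
        rw [← dist_eq_sum_abs]
        gcongr
        exact Real.le_coe_toNNReal _

end L1Simplex

open L1Simplex in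
theorem exists_stationary_tendsto_of_isPrimitive [Nonempty ι] [DecidableEq ι]
    {P : Matrix ι ι ℝ} (hP : P ∈ rowStochastic ℝ ι) (hprim : P.IsPrimitive) :
    ∃ π ∈ stdSimplex ℝ ι, π ᵥ* P = π ∧
      (∀ π' ∈ stdSimplex ℝ ι, π' ᵥ* P = π' → π' = π) ∧
      ∀ p ∈ stdSimplex ℝ ι, Tendsto (fun k : ℕ => p ᵥ* P ^ k) atTop (𝓝 π) := by
  obtain ⟨r, hr, hpos⟩ := hprim.exists_pos_pow
  obtain ⟨K, hK⟩ := exists_contractingWith_step (pow_mem hP r) hpos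
  rw [← step_iterate hP] at hK
  set π := hK.fixedPoint (step P hP)^[r]
  refine ⟨π.1.ofLp, π.2, isFixedPt_step_iff.1 hK.isFixedPt_fixedPoint_iterate,
    fun π' hπ' hfix => ?_, fun p hp => ?_⟩
  · have hfix' : Function.IsFixedPt (step P hP) ⟨WithLp.toLp 1 π', hπ'⟩ :=
      isFixedPt_step_iff.2 hfix
    exact congrArg (fun q => q.1.ofLp) (hK.fixedPoint_unique (hfix'.iterate r))
  · have hcont : Continuous fun q : L1Simplex ι => q.1.ofLp :=
      (PiLp.continuous_ofLp 1 fun _ : ι => ℝ).comp continuous_subtype_val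
    have hlim := (hcont.tendsto π).comp
      (tendsto_iterate_of_contractingWith_iterate hr.ne' hK ⟨WithLp.toLp 1 p, hp⟩)
    simpa only [step_iterate] using! hlim

end StochasticMatrix

section BipartiteRank

theorem sum_ite_one_div_card_filter {α : Type*} [Fintype α] {s : α → Prop} [DecidablePred s]
    (hs : ∃ a, s a) :
    ∑ a, (if s a then 1 / ((Finset.univ.filter s).card : ℝ) else 0) = 1 := by
  obtain ⟨a, ha⟩ := hs
  have hcard : ((Finset.univ.filter s).card : ℝ) ≠ 0 :=
    Nat.cast_ne_zero.2 (Finset.card_ne_zero_of_mem (Finset.mem_filter.2 ⟨Finset.mem_univ a, ha⟩))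
  rw [← Finset.sum_filter, Finset.sum_const, nsmul_eq_mul, mul_one_div_cancel hcard]

variable {U V : Type*} [Fintype U] [Fintype V]

theorem Mmat_nonneg (i j : U ⊕ V) : 0 ≤ Mmat U V i j := by
  rcases i with u | v <;> rcases j with u' | v' <;> simp [Mmat]

theorem Mmat_inl_inl_pos (u u' : U) : 0 < Mmat U V (Sum.inl u) (Sum.inl u') :=
  one_div_pos.2 (Nat.cast_pos.2 (Fintype.card_pos_iff.2 ⟨u⟩))

theorem Mmat_inr_inr_pos (v v' : V) : 0 < Mmat U V (Sum.inr v) (Sum.inr v') :=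
  one_div_pos.2 (Nat.cast_pos.2 (Fintype.card_pos_iff.2 ⟨v⟩))

theorem Mmat_mem_rowStochastic [DecidableEq U] [DecidableEq V] :
    Mmat U V ∈ rowStochastic ℝ (U ⊕ V) := by
  refine mem_rowStochastic_iff_sum.2 ⟨Mmat_nonneg, ?_⟩
  rintro (u | v)
  · have : Nonempty U := ⟨u⟩
    simp [Mmat]
  · have : Nonempty V := ⟨v⟩
    simp [Mmat]

variable {E : U → V → Prop} [∀ u v, Decidable (E u v)]

theorem Hmat_nonneg (i j : U ⊕ V) : 0 ≤ Hmat E i j := by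
  rcases i with u | v <;> rcases j with u' | v' <;> simp only [Hmat, of_apply] <;> positivity

theorem Hmat_inl_inr_pos {u : U} {v : V} (huv : E u v) :
    0 < Hmat E (Sum.inl u) (Sum.inr v) := by
  have hdeg : 0 < (Finset.univ.filter fun v' => E u v').card :=
    Finset.card_pos.2 ⟨v, by simpa using huv⟩
  simpa [Hmat, huv] using hdeg

theorem Hmat_inr_inl_pos {u : U} {v : V} (huv : E u v) :
    0 < Hmat E (Sum.inr v) (Sum.inl u) := by
  have hdeg : 0 < (Finset.univ.filter fun u' => E u' v).card :=
    Finset.card_pos.2 ⟨u, by simpa using huv⟩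
  simpa [Hmat, huv] using hdeg

theorem Hmat_mem_rowStochastic [DecidableEq U] [DecidableEq V]
    (hnoIsolU : ∀ u, ∃ v, E u v) (hnoIsolV : ∀ v, ∃ u, E u v) :
    Hmat E ∈ rowStochastic ℝ (U ⊕ V) := by
  refine mem_rowStochastic_iff_sum.2 ⟨Hmat_nonneg, ?_⟩
  rintro (u | v)
  · simpa [Hmat] using sum_ite_one_div_card_filter (hnoIsolU u)
  · simpa [Hmat] using sum_ite_one_div_card_filter (hnoIsolV v)

variable {ε : ℝ}

theorem Pmat_mem_rowStochastic [DecidableEq U] [DecidableEq V]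
    (hnoIsolU : ∀ u, ∃ v, E u v) (hnoIsolV : ∀ v, ∃ u, E u v) (hε0 : 0 ≤ ε) (hε1 : ε ≤ 1) :
    Pmat E ε ∈ rowStochastic ℝ (U ⊕ V) :=
  convex_rowStochastic (Hmat_mem_rowStochastic hnoIsolU hnoIsolV) Mmat_mem_rowStochastic
    hε0 (sub_nonneg.2 hε1) (add_sub_cancel ε 1)

theorem Pmat_pos_of_Hmat_pos (hε0 : 0 < ε) (hε1 : ε ≤ 1) {i j : U ⊕ V} (hij : 0 < Hmat E i j) :
    0 < Pmat E ε i j :=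
  add_pos_of_pos_of_nonneg (mul_pos hε0 hij) (mul_nonneg (sub_nonneg.2 hε1) (Mmat_nonneg i j))

theorem Pmat_pos_of_Mmat_pos (hε0 : 0 ≤ ε) (hε1 : ε < 1) {i j : U ⊕ V} (hij : 0 < Mmat U V i j) :
    0 < Pmat E ε i j :=
  add_pos_of_nonneg_of_pos (mul_nonneg hε0 (Hmat_nonneg i j)) (mul_pos (sub_pos.2 hε1) hij)

theorem exists_Pmat_pos_and_Mmat_pos (hnoIsolU : ∀ u, ∃ v, E u v) (hnoIsolV : ∀ v, ∃ u, E u v)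
    (hε0 : 0 < ε) (hε1 : ε < 1) (i j : U ⊕ V) :
    ∃ k, 0 < Pmat E ε i k ∧ 0 < Mmat U V k j := by
  rcases i with u | v <;> rcases j with u' | v'
  · exact ⟨Sum.inl u, Pmat_pos_of_Mmat_pos hε0.le hε1 (Mmat_inl_inl_pos u u),
      Mmat_inl_inl_pos u u'⟩
  · obtain ⟨v, huv⟩ := hnoIsolU u
    exact ⟨Sum.inr v, Pmat_pos_of_Hmat_pos hε0 hε1.le (Hmat_inl_inr_pos huv),
      Mmat_inr_inr_pos v v'⟩
  · obtain ⟨u, huv⟩ := hnoIsolV v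
    exact ⟨Sum.inl u, Pmat_pos_of_Hmat_pos hε0 hε1.le (Hmat_inr_inl_pos huv),
      Mmat_inl_inl_pos u u'⟩
  · exact ⟨Sum.inr v, Pmat_pos_of_Mmat_pos hε0.le hε1 (Mmat_inr_inr_pos v v),
      Mmat_inr_inr_pos v v'⟩

theorem Pmat_isPrimitive [DecidableEq U] [DecidableEq V]
    (hnoIsolU : ∀ u, ∃ v, E u v) (hnoIsolV : ∀ v, ∃ u, E u v) (hε0 : 0 < ε) (hε1 : ε < 1) :
    (Pmat E ε).IsPrimitive := by
  have hnonneg := (Pmat_mem_rowStochastic hnoIsolU hnoIsolV hε0.le hε1.le).1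
  refine ⟨hnonneg, 2, two_pos, fun i j => ?_⟩
  obtain ⟨k, hik, hkj⟩ := exists_Pmat_pos_and_Mmat_pos hnoIsolU hnoIsolV hε0 hε1 i j
  rw [sq]
  exact mul_apply_pos_of_pos hnonneg hnonneg hik (Pmat_pos_of_Mmat_pos hε0.le hε1 hkj)

end BipartiteRank

/-- For every probability row vector `p`, the sequence `pᵀ P^k` converges as `k → ∞`
to the unique stationary probability distribution `π` of `P`; in particular the limit
is independent of `p`. -/
theorem Pmat_power_method_converges {U V : Type*} [Fintype U] [Fintype V]
    [DecidableEq U] [DecidableEq V] [Nonempty U] [Nonempty V]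
    (E : U → V → Prop) [∀ u v, Decidable (E u v)]
    (hedge : ∃ u v, E u v)
    (hnoIsolU : ∀ u : U, ∃ v : V, E u v) (hnoIsolV : ∀ v : V, ∃ u : U, E u v)
    (ε : ℝ) (hε0 : 0 < ε) (hε1 : ε < 1) :
    ∃ π : (U ⊕ V) → ℝ,
      ((∀ i, 0 ≤ π i) ∧ ∑ i, π i = 1 ∧ π ᵥ* Pmat E ε = π) ∧
      (∀ π' : (U ⊕ V) → ℝ,
        ((∀ i, 0 ≤ π' i) ∧ ∑ i, π' i = 1 ∧ π' ᵥ* Pmat E ε = π') → π' = π) ∧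
      (∀ p : (U ⊕ V) → ℝ, (∀ i, 0 ≤ p i) → ∑ i, p i = 1 →
        Filter.Tendsto (fun k : ℕ => p ᵥ* (Pmat E ε ^ k)) Filter.atTop (nhds π)) := by
  obtain ⟨π, hπ, hfix, huniq, hlim⟩ := exists_stationary_tendsto_of_isPrimitive
    (Pmat_mem_rowStochastic hnoIsolU hnoIsolV hε0.le hε1.le)
    (Pmat_isPrimitive hnoIsolU hnoIsolV hε0 hε1)
  exact ⟨π, ⟨hπ.1, hπ.2, hfix⟩, fun π' ⟨hnonneg, hsum, hfix'⟩ => huniq π' ⟨hnonneg, hsum⟩ hfix',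
    fun p hnonneg hsum => hlim p ⟨hnonneg, hsum⟩⟩
end

section
/- Let S and M be n×n real row-stochastic matrices, let η ≥ 0 and μ ≥ 0 with η + μ < 1, and let G = ηS + μM + (1 − η − μ)(1/n)·eeᵀ be the NCDawareRank matrix. Then every complex eigenvalue λ of G with λ ≠ 1 satisfies |λ| ≤ η + μ; in particular the subdominant eigenvalue of G is bounded in modulus by η + μ. -/
open Matrix

/-!
A left eigenvector `v` of `G` for an eigenvalue `λ ≠ 1` is orthogonal to the right eigenvector `e`
(`G e = e`), so the rank-one teleportation term annihilates `v`. Hence `λ` is already an eigenvalue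
of `η S + μ M`, and it is bounded by the `ℓ^∞` operator norm of that matrix, where row-stochastic
matrices have norm at most one.
-/

section Spectrum

variable {ι K : Type*} [Fintype ι]

lemma dotProduct_eq_zero_of_vecMul_eq_smul_of_mulVec_eq_smul [CommRing K] [NoZeroDivisors K]
    {A : Matrix ι ι K} {u v : ι → K} {a b : K} (hv : v ᵥ* A = a • v) (hu : A *ᵥ u = b • u)
    (hab : a ≠ b) : v ⬝ᵥ u = 0 := by
  have hassoc : a * (v ⬝ᵥ u) = b * (v ⬝ᵥ u) := by
    simpa only [hv, hu, smul_dotProduct, dotProduct_smul, smul_eq_mul]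
      using (dotProduct_mulVec v A u).symm
  exact (mul_eq_mul_right_iff.mp hassoc).resolve_left hab

variable [DecidableEq ι] [Field K]

lemma mem_spectrum_iff_exists_vecMul_eq_smul {A : Matrix ι ι K} {a : K} :
    a ∈ spectrum K A ↔ ∃ v ≠ 0, v ᵥ* A = a • v := by
  rw [spectrum.mem_iff, isUnit_iff_isUnit_det, isUnit_iff_ne_zero, not_not,
    ← exists_vecMul_eq_zero_iff]
  simp only [vecMul_sub, sub_eq_zero, Algebra.algebraMap_eq_smul_one, vecMul_smul, vecMul_one,
    eq_comm]

lemma mem_spectrum_of_mem_spectrum_add_vecMulVec {A : Matrix ι ι K} {u w : ι → K} {a b : K}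
    (hu : (A + vecMulVec u w) *ᵥ u = b • u) (ha : a ∈ spectrum K (A + vecMulVec u w))
    (hab : a ≠ b) : a ∈ spectrum K A := by
  obtain ⟨v, hv_ne, hv⟩ := mem_spectrum_iff_exists_vecMul_eq_smul.mp ha
  have hvu : v ⬝ᵥ u = 0 := dotProduct_eq_zero_of_vecMul_eq_smul_of_mulVec_eq_smul hv hu hab
  refine mem_spectrum_iff_exists_vecMul_eq_smul.mpr ⟨v, hv_ne, ?_⟩
  simpa only [vecMul_add, vecMul_vecMulVec, hvu, zero_smul, add_zero] using hv

end Spectrum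

section OperatorNorm

open scoped Matrix.Norms.Operator

variable {ι : Type*} [Fintype ι]

lemma linfty_opNorm_map_eq {κ α β : Type*} [Fintype κ] [SeminormedAddCommGroup α]
    [SeminormedAddCommGroup β] (A : Matrix ι κ α) (f : α → β) (hf : ∀ a, ‖f a‖₊ = ‖a‖₊) :
    ‖A.map f‖ = ‖A‖ := by
  simp only [linfty_opNorm_def, map_apply, hf]

variable [DecidableEq ι]

lemma norm_le_linfty_opNorm_of_mem_spectrum {𝕜 : Type*} [NormedField 𝕜] {A : Matrix ι ι 𝕜} {a : 𝕜}
    (ha : a ∈ spectrum 𝕜 A) : ‖a‖ ≤ ‖A‖ := by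
  rw [← spectrum_toLin', ← Module.End.hasEigenvalue_iff_mem_spectrum] at ha
  obtain ⟨v, hv⟩ := ha.exists_hasEigenvector
  have hAv : A *ᵥ v = a • v := hv.apply_eq_smul
  have hbound : ‖a‖ * ‖v‖ ≤ ‖A‖ * ‖v‖ := by
    simpa only [hAv, norm_smul] using linfty_opNorm_mulVec A v
  exact le_of_mul_le_mul_right hbound (norm_pos_iff.mpr hv.2)

lemma linfty_opNorm_le_one_of_mem_rowStochastic {S : Matrix ι ι ℝ} (hS : S ∈ rowStochastic ℝ ι) :
    ‖S‖ ≤ 1 := by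
  rw [linfty_opNorm_def, ← NNReal.coe_one, NNReal.coe_le_coe]
  refine Finset.sup_le fun i _ => ?_
  rw [← NNReal.coe_le_coe, NNReal.coe_sum, NNReal.coe_one, ← sum_row_of_mem_rowStochastic hS i]
  exact Finset.sum_le_sum fun j _ =>
    (Real.norm_of_nonneg (nonneg_of_mem_rowStochastic hS)).le

lemma linfty_opNorm_smul_add_smul_le_of_mem_rowStochastic {S M : Matrix ι ι ℝ}
    (hS : S ∈ rowStochastic ℝ ι) (hM : M ∈ rowStochastic ℝ ι) (η μ : ℝ) :
    ‖η • S + μ • M‖ ≤ |η| + |μ| :=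
  calc ‖η • S + μ • M‖ ≤ |η| * ‖S‖ + |μ| * ‖M‖ := by
        simpa only [norm_smul, Real.norm_eq_abs] using norm_add_le (η • S) (μ • M)
    _ ≤ |η| * 1 + |μ| * 1 := by
        gcongr
        exacts [linfty_opNorm_le_one_of_mem_rowStochastic hS,
          linfty_opNorm_le_one_of_mem_rowStochastic hM]
    _ = |η| + |μ| := by rw [mul_one, mul_one]

end OperatorNorm

section NCDawareRank

variable {ι : Type*} [Fintype ι] [DecidableEq ι] {S M : Matrix ι ι ℝ}

lemma norm_le_of_mem_spectrum_smul_add_smul_of_mem_rowStochastic (hS : S ∈ rowStochastic ℝ ι)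
    (hM : M ∈ rowStochastic ℝ ι) {η μ : ℝ} {lam : ℂ}
    (hlam : lam ∈ spectrum ℂ ((η • S + μ • M).map Complex.ofReal)) : ‖lam‖ ≤ |η| + |μ| := by
  open scoped Matrix.Norms.Operator in
  calc ‖lam‖ ≤ ‖(η • S + μ • M).map Complex.ofReal‖ := norm_le_linfty_opNorm_of_mem_spectrum hlam
    _ = ‖η • S + μ • M‖ := linfty_opNorm_map_eq _ _ Complex.nnnorm_real
    _ ≤ |η| + |μ| := linfty_opNorm_smul_add_smul_le_of_mem_rowStochastic hS hM η μ

lemma smul_add_smul_add_smul_replicateRow_mulVec_one (hS : S ∈ rowStochastic ℝ ι)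
    (hM : M ∈ rowStochastic ℝ ι) (η μ : ℝ) {w : ι → ℝ} (hw : ∑ j, w j = 1) :
    (η • S + μ • M + (1 - η - μ) • replicateRow ι w) *ᵥ 1 = 1 := by
  have hw_mulVec : replicateRow ι w *ᵥ 1 = 1 := by
    rw [replicateRow_mulVec_eq_const, dotProduct_one, hw]
    rfl
  rw [add_mulVec, add_mulVec, smul_mulVec, smul_mulVec, smul_mulVec, hw_mulVec,
    one_vecMul_of_mem_rowStochastic hS, one_vecMul_of_mem_rowStochastic hM]
  module

theorem ncdawarerank_subdominant_le_general (hS : S ∈ rowStochastic ℝ ι)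
    (hM : M ∈ rowStochastic ℝ ι) {w : ι → ℝ} (hw : ∑ j, w j = 1) {η μ : ℝ} {lam : ℂ}
    (hlam : lam ∈ spectrum ℂ
      ((η • S + μ • M + (1 - η - μ) • replicateRow ι w).map Complex.ofReal))
    (hlam_ne : lam ≠ 1) : ‖lam‖ ≤ |η| + |μ| := by
  set G : Matrix ι ι ℝ := η • S + μ • M + (1 - η - μ) • replicateRow ι w with hG
  have hG_one : G.map Complex.ofReal *ᵥ 1 = (1 : ℂ) • 1 := by
    ext i
    have hi : (G *ᵥ 1) i = 1 :=
      congrFun (smul_add_smul_add_smul_replicateRow_mulVec_one hS hM η μ hw) i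
    simpa [mulVec, dotProduct] using congrArg Complex.ofReal hi
  have hG_split : G.map Complex.ofReal = (η • S + μ • M).map Complex.ofReal +
      vecMulVec 1 fun j => ((1 - η - μ) * w j : ℂ) := by
    ext i j
    simp [hG]
  rw [hG_split] at hlam hG_one
  exact norm_le_of_mem_spectrum_smul_add_smul_of_mem_rowStochastic hS hM
    (mem_spectrum_of_mem_spectrum_add_vecMulVec hG_one hlam hlam_ne)

end NCDawareRank

/-- Every eigenvalue `λ ≠ 1` of the NCDawareRank matrix
`G = η S + μ M + (1 - η - μ) (1/n) e eᵀ`, built from row-stochastic matrices `S`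
and `M`, satisfies `|λ| ≤ η + μ`; in particular the subdominant eigenvalue of `G`
is bounded in modulus by `η + μ`. -/
theorem ncdawarerank_subdominant_le (n : ℕ) (hn : 0 < n)
    (S M : Matrix (Fin n) (Fin n) ℝ)
    (hS0 : ∀ i j, 0 ≤ S i j) (hS1 : ∀ i, ∑ j, S i j = 1)
    (hM0 : ∀ i j, 0 ≤ M i j) (hM1 : ∀ i, ∑ j, M i j = 1)
    (η μ : ℝ) (hη : 0 ≤ η) (hμ : 0 ≤ μ) (hημ : η + μ < 1) :
    ∀ lam : ℂ,
      lam ∈ spectrum ℂ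
        ((η • S + μ • M + (1 - η - μ) • Matrix.of fun _ _ : Fin n => (1 : ℝ) / n).map
          Complex.ofReal) →
      lam ≠ 1 → ‖lam‖ ≤ η + μ := by
  intro lam hlam hne
  have hw : ∑ _j : Fin n, (1 : ℝ) / n = 1 := by simp [hn.ne']
  simpa only [abs_of_nonneg hη, abs_of_nonneg hμ] using
    ncdawarerank_subdominant_le_general (mem_rowStochastic_iff_sum.mpr ⟨hS0, hS1⟩)
      (mem_rowStochastic_iff_sum.mpr ⟨hM0, hM1⟩) hw hlam hne
end
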